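/- Let m ≥ 1, n ≥ 2, and for 1 ≤ i ≤ m let f_i(x) = xᵀA_i x + c_iᵀx + d_i be quadratic functions on ℝⁿ with f₁(x) = ‖x‖² − 1 (A₁ = I, c₁ = 0, d₁ = −1), and let U_i > 0 be reals for 2 ≤ i ≤ m. Let M ≥ 1 be a real number that is an upper bound on the absolute values of all coefficients of system (sys2); in particular M ≥ |(A_i)_{jk}|, M ≥ |(c_i)_j|, M ≥ |d_i| for all i, j, k, and M ≥ 1/U_i for 2 ≤ i ≤ m. Let 0 ≤ ε < 1/2 and suppose ẑ = (v̂₀, x̂, ŝ₁, …, ŝ_m, ŵ₂, …, ŵ_m) is ε-feasible for system (sys2). Then the vector sgn(v̂₀)·x̂ ∈ ℝⁿ is (2n+1)Mε-feasible for the system f_i(x) ≤ 0 (1 ≤ i ≤ m), i.e. f_i(sgn(v̂₀)·x̂) ≤ (2n+1)Mε for all 1 ≤ i ≤ m. -/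

import Mathlib

open Matrix Finset

/-!
Averaging the slack equations and the sphere equation forces `|v₀² - 1| ≤ ε`, and the
homogenized ball constraint gives `‖x‖² ≤ v₀² + ε ≤ (1 + |v₀|)²`. Replacing `v₀` by `σ = sgn v₀` in
a homogenized quadratic turns it into `f (σ x)` and costs `(σ - v₀) cᵀx + d (1 - v₀²)`. Since
`|σ - v₀| (1 + |v₀|) = |v₀² - 1|`, the bound on `‖x‖` absorbs the denominator `1 + |v₀|`, so the
linear term is at most `‖c‖ ε` and the constant term at most `|d| ε`.
-/

/-- The sign of a real number with the convention `sgn 0 = 1`, so that `sgn t` is always a unit;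
this differs from `SignType.sign` and `Real.sign`, which vanish at `0`. -/
noncomputable def sgn (t : ℝ) : ℝ := if 0 ≤ t then 1 else -1

theorem sgn_mul_self (t : ℝ) : sgn t * sgn t = 1 := by
  unfold sgn
  split_ifs <;> norm_num

theorem abs_sgn_sub_self (t : ℝ) : |sgn t - t| = |(1 - |t|)| := by
  unfold sgn
  split_ifs with ht
  · rw [abs_of_nonneg ht]
  · rw [abs_of_neg (not_le.mp ht), ← abs_neg]
    ring_nf

theorem abs_sgn_sub_self_mul_one_add_abs (t : ℝ) : |sgn t - t| * (1 + |t|) = |t ^ 2 - 1| := by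
  calc |sgn t - t| * (1 + |t|)
      = |(1 - |t|)| * |(1 + |t|)| := by
        rw [abs_sgn_sub_self, abs_of_nonneg (by positivity : 0 ≤ 1 + |t|)]
    _ = |1 - t ^ 2| := by rw [← abs_mul, ← sq_abs t]; ring_nf
    _ = |t ^ 2 - 1| := abs_sub_comm _ _

theorem abs_sgn_sub_self_mul_sqrt_le {t r : ℝ} (hr : r ≤ t ^ 2 + 1) :
    |sgn t - t| * √r ≤ |t ^ 2 - 1| := by
  have hsqrt : √r ≤ 1 + |t| :=
    Real.sqrt_le_iff.mpr ⟨by positivity, by nlinarith [sq_abs t, abs_nonneg t]⟩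
  calc |sgn t - t| * √r ≤ |sgn t - t| * (1 + |t|) := by gcongr
    _ = |t ^ 2 - 1| := abs_sgn_sub_self_mul_one_add_abs t

theorem abs_sub_le_of_abs_sum_add_sub_le {ι : Type*} (S : Finset ι) {t : ι → ℝ} {a b ε : ℝ}
    (ht : ∀ i ∈ S, |t i - a| ≤ ε) (hsum : |∑ i ∈ S, t i + a - (#S + 1) * b| ≤ ε) :
    |a - b| ≤ ε := by
  have hdev : |∑ i ∈ S, (t i - a)| ≤ #S * ε := by
    rw [← nsmul_eq_mul]
    exact (abs_sum_le_sum_abs _ _).trans (sum_le_card_nsmul S _ ε ht)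
  have hsplit : (#S + 1) * (a - b) =
      (∑ i ∈ S, t i + a - (#S + 1) * b) - ∑ i ∈ S, (t i - a) := by
    rw [sum_sub_distrib, sum_const, nsmul_eq_mul]
    ring
  have hpos : (0 : ℝ) < #S + 1 := by positivity
  refine le_of_mul_le_mul_left ?_ hpos
  calc (#S + 1) * |a - b| = |(#S + 1) * (a - b)| := by rw [abs_mul, abs_of_pos hpos]
    _ ≤ |∑ i ∈ S, t i + a - (#S + 1) * b| + |∑ i ∈ S, (t i - a)| := hsplit ▸ abs_sub _ _
    _ ≤ (#S + 1) * ε := by linarith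

section Quadratic

variable {κ : Type*} [Fintype κ]

theorem abs_dotProduct_le_sqrt_mul_sqrt (c x : κ → ℝ) :
    |c ⬝ᵥ x| ≤ √(∑ j, c j ^ 2) * √(∑ j, x j ^ 2) := by
  rw [← Real.sqrt_mul (sum_nonneg fun j _ => sq_nonneg (c j))]
  exact Real.abs_le_sqrt (sum_mul_sq_le_sq_mul_sq univ c x)

theorem sqrt_sum_sq_le_card_mul {c : κ → ℝ} {M : ℝ} (hc : ∀ j, |c j| ≤ M) :
    √(∑ j, c j ^ 2) ≤ Fintype.card κ * M := by
  have hsum : ∑ j, |c j| ≤ Fintype.card κ * M := by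
    simpa only [nsmul_eq_mul, card_univ] using sum_le_card_nsmul univ _ M fun j _ => hc j
  have hsq : ∑ j, c j ^ 2 ≤ (∑ j, |c j|) ^ 2 := by
    simpa only [sq_abs] using sum_sq_le_sq_sum_of_nonneg (s := univ) fun j _ => abs_nonneg (c j)
  exact (Real.sqrt_le_iff.mpr ⟨sum_nonneg fun j _ => abs_nonneg (c j), hsq⟩).trans hsum

theorem quadratic_smul_of_mul_self_eq_one (A : Matrix κ κ ℝ) (c x : κ → ℝ) (d v : ℝ) {σ : ℝ}
    (hσ : σ * σ = 1) :
    (σ • x) ⬝ᵥ A *ᵥ (σ • x) + c ⬝ᵥ (σ • x) + d =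
      (x ⬝ᵥ A *ᵥ x + v * (c ⬝ᵥ x) + d * v ^ 2) + (σ - v) * (c ⬝ᵥ x) + d * (1 - v ^ 2) := by
  simp only [mulVec_smul, dotProduct_smul, smul_dotProduct, smul_eq_mul]
  linear_combination (x ⬝ᵥ A *ᵥ x) * hσ

theorem quadratic_sgn_smul_le {A : Matrix κ κ ℝ} {c x : κ → ℝ} {d v ε : ℝ}
    (hx : ∑ j, x j ^ 2 ≤ v ^ 2 + 1) (hv : |v ^ 2 - 1| ≤ ε)
    (hq : x ⬝ᵥ A *ᵥ x + v * (c ⬝ᵥ x) + d * v ^ 2 ≤ ε) :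
    (sgn v • x) ⬝ᵥ A *ᵥ (sgn v • x) + c ⬝ᵥ (sgn v • x) + d ≤
      (1 + √(∑ j, c j ^ 2) + |d|) * ε := by
  have hlin : (sgn v - v) * (c ⬝ᵥ x) ≤ √(∑ j, c j ^ 2) * ε :=
    calc (sgn v - v) * (c ⬝ᵥ x) ≤ |sgn v - v| * |c ⬝ᵥ x| := (le_abs_self _).trans (abs_mul _ _).le
      _ ≤ |sgn v - v| * (√(∑ j, c j ^ 2) * √(∑ j, x j ^ 2)) := by
        gcongr
        exact abs_dotProduct_le_sqrt_mul_sqrt c x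
      _ = √(∑ j, c j ^ 2) * (|sgn v - v| * √(∑ j, x j ^ 2)) := by ring
      _ ≤ √(∑ j, c j ^ 2) * ε := by
        gcongr
        exact (abs_sgn_sub_self_mul_sqrt_le hx).trans hv
  have hconst : d * (1 - v ^ 2) ≤ |d| * ε :=
    calc d * (1 - v ^ 2) ≤ |d| * |v ^ 2 - 1| := by
          rw [abs_sub_comm, ← abs_mul]
          exact le_abs_self _
      _ ≤ |d| * ε := by gcongr
  rw [quadratic_smul_of_mul_self_eq_one A c x d v (sgn_mul_self v)]
  linarith

theorem one_add_sqrt_sum_sq_add_abs_le [Nonempty κ] {c : κ → ℝ} {d M : ℝ} (hM : 1 ≤ M)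
    (hc : ∀ j, |c j| ≤ M) (hd : |d| ≤ M) :
    1 + √(∑ j, c j ^ 2) + |d| ≤ (2 * Fintype.card κ + 1) * M := by
  have hcard : (1 : ℝ) ≤ Fintype.card κ := by exact_mod_cast Fintype.card_pos (α := κ)
  nlinarith [sqrt_sum_sq_le_card_mul hc]

/-- The normalized slack terms `(sᵢ² + wᵢ²) / Uᵢ` are replaced by arbitrary reals `tᵢ`. -/
theorem stmt_3_general {ι : Type*} [Fintype ι] [DecidableEq ι] [DecidableEq κ] (i₀ : ι)
    (A : ι → Matrix κ κ ℝ) (c : ι → κ → ℝ) (d : ι → ℝ)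
    (hA : A i₀ = 1) (hc : c i₀ = 0) (hd : d i₀ = -1)
    (ε : ℝ) (hε : ε ≤ 1) (v : ℝ) (x : κ → ℝ) (s t : ι → ℝ)
    (hquad : ∀ i, |x ⬝ᵥ A i *ᵥ x + v * (c i ⬝ᵥ x) + d i * v ^ 2 + s i ^ 2| ≤ ε)
    (hslack : ∀ i, i ≠ i₀ → |t i - v ^ 2| ≤ ε)
    (hsphere : |∑ j, x j ^ 2 + s i₀ ^ 2 + ∑ i ∈ univ.erase i₀, t i + v ^ 2
      - (Fintype.card ι + 1)| ≤ ε) (i : ι) :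
    (sgn v • x) ⬝ᵥ A i *ᵥ (sgn v • x) + c i ⬝ᵥ (sgn v • x) + d i ≤
      (1 + √(∑ j, c i j ^ 2) + |d i|) * ε := by
  have hball : |∑ j, x j ^ 2 + s i₀ ^ 2 - v ^ 2| ≤ ε := by
    convert hquad i₀ using 2
    have hdot : x ⬝ᵥ x = ∑ j, x j ^ 2 := by simp only [dotProduct, sq]
    rw [hA, hc, hd, one_mulVec, zero_dotProduct, hdot]
    ring
  have hv : |v ^ 2 - 1| ≤ ε := by
    refine abs_sub_le_of_abs_sum_add_sub_le univ
      (t := Function.update t i₀ (∑ j, x j ^ 2 + s i₀ ^ 2)) (fun k _ => ?_) ?_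
    · rcases eq_or_ne k i₀ with rfl | hk
      · simpa only [Function.update_self] using hball
      · simpa only [Function.update_of_ne hk] using hslack k hk
    · rwa [sum_update_of_mem (mem_univ i₀), sdiff_singleton_eq_erase, card_univ, mul_one]
  have hx : ∑ j, x j ^ 2 ≤ v ^ 2 + 1 := by linarith [(abs_le.mp hball).2, sq_nonneg (s i₀)]
  exact quadratic_sgn_smul_le hx hv (by linarith [(abs_le.mp (hquad i)).2, sq_nonneg (s i)])

end Quadratic

/-- Lemma `equiv`(b) of the paper: if `ẑ = (v̂₀, x̂, ŝ, ŵ)` is `ε`-feasible for the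
system (sys2), where `M ≥ 1` bounds the absolute values of all coefficients of (sys2),
then `sgn(v̂₀) x̂` is `(2n+1)Mε`-feasible for the system `fᵢ(x) ≤ 0`, `1 ≤ i ≤ m`. -/
theorem stmt_3 (n m : ℕ) [NeZero m] (hn : 2 ≤ n)
    (A : Fin m → Matrix (Fin n) (Fin n) ℝ)
    (c : Fin m → (Fin n → ℝ)) (d : Fin m → ℝ)
    (hAsym : ∀ i, (A i).IsSymm)
    (f : Fin m → (Fin n → ℝ) → ℝ)
    (hf : ∀ i x, f i x = x ⬝ᵥ (A i).mulVec x + c i ⬝ᵥ x + d i)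
    (hA1 : A 0 = 1) (hc1 : c 0 = 0) (hd1 : d 0 = -1)
    (U : Fin m → ℝ) (hU : ∀ i, i ≠ 0 → 0 < U i)
    (M : ℝ) (hM1 : 1 ≤ M)
    (hMA : ∀ i j k, |A i j k| ≤ M) (hMc : ∀ i j, |c i j| ≤ M) (hMd : ∀ i, |d i| ≤ M)
    (hMU : ∀ i, i ≠ 0 → 1 / U i ≤ M)
    (ε : ℝ) (hε0 : 0 ≤ ε) (hε1 : ε < 1 / 2)
    (v0 : ℝ) (x : Fin n → ℝ) (s : Fin m → ℝ) (w : Fin m → ℝ)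
    (h1 : ∀ i, |x ⬝ᵥ (A i).mulVec x + v0 * (c i ⬝ᵥ x) + d i * v0 ^ 2 + s i ^ 2| ≤ ε)
    (h2 : ∀ i, i ≠ 0 → |(s i ^ 2 + w i ^ 2) / U i - v0 ^ 2| ≤ ε)
    (h3 : |(∑ j, x j ^ 2) + s 0 ^ 2 + (∑ i ∈ univ.erase 0, (s i ^ 2 + w i ^ 2) / U i)
            + v0 ^ 2 - (m + 1)| ≤ ε) :
    ∀ i, f i ((if 0 ≤ v0 then (1 : ℝ) else -1) • x) ≤ (2 * n + 1) * M * ε := by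
  intro i
  have : Nonempty (Fin n) := ⟨⟨0, by lia⟩⟩
  have hgeneral := stmt_3_general 0 A c d hA1 hc1 hd1 ε (by linarith) v0 x s _ h1 h2
    (by rwa [Fintype.card_fin]) i
  have hcoeff := one_add_sqrt_sum_sq_add_abs_le hM1 (hMc i) (hMd i)
  rw [Fintype.card_fin] at hcoeff
  rw [hf]
  exact hgeneral.trans (mul_le_mul_of_nonneg_right hcoeff hε0)
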